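/- arXiv:1312.6607 — 5 statements merged into one kernel-verified Lean document; each statement's English description precedes it below -/
import Mathlib

section
/- Let μ be a probability measure on ℝ and let Λ : ℝ → ℝ be a monotone nondecreasing function with 0 ≤ Λ(t) ≤ 1 for all t. Then for every x ∈ ℝ, ∫_{(-∞,x]} Λ dμ ≤ μ((-∞,x]) · ∫_ℝ Λ dμ. -/
open MeasureTheory

/-- For a probability measure `μ` on `ℝ` and a monotone nondecreasing `Λ : ℝ → ℝ` with
`0 ≤ Λ ≤ 1`, one has `∫_{(-∞,x]} Λ dμ ≤ μ((-∞,x]) · ∫ Λ dμ` for every `x`. -/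
theorem stmt_0 (μ : Measure ℝ) [IsProbabilityMeasure μ]
    (Λ : ℝ → ℝ) (hmono : Monotone Λ)
    (hbound : ∀ t : ℝ, 0 ≤ Λ t ∧ Λ t ≤ 1) :
    ∀ x : ℝ, ∫ t in Set.Iic x, Λ t ∂μ ≤ (μ (Set.Iic x)).toReal * ∫ t, Λ t ∂μ := by
  intro x
  have hint : Integrable Λ μ :=
    Integrable.of_bound hmono.measurable.aestronglyMeasurable 1 <| .of_forall fun t => by
      simpa [abs_of_nonneg (hbound t).1] using (hbound t).2
  have hlower : ∫ t in Set.Iic x, Λ t ∂μ ≤ μ.real (Set.Iic x) * Λ x := by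
    calc ∫ t in Set.Iic x, Λ t ∂μ ≤ ∫ _ in Set.Iic x, Λ x ∂μ :=
          setIntegral_mono_on hint.integrableOn integrableOn_const measurableSet_Iic
            fun t ht => hmono ht
      _ = μ.real (Set.Iic x) * Λ x := by simp
  have hupper : (1 - μ.real (Set.Iic x)) * Λ x ≤ ∫ t in (Set.Iic x)ᶜ, Λ t ∂μ := by
    calc (1 - μ.real (Set.Iic x)) * Λ x = ∫ _ in (Set.Iic x)ᶜ, Λ x ∂μ := by
          rw [setIntegral_const, probReal_compl_eq_one_sub measurableSet_Iic, smul_eq_mul]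
      _ ≤ ∫ t in (Set.Iic x)ᶜ, Λ t ∂μ :=
          setIntegral_mono_on integrableOn_const hint.integrableOn measurableSet_Iic.compl
            fun t ht => hmono (lt_of_not_ge (Set.notMem_of_mem_compl ht)).le
  have hp : 0 ≤ 1 - μ.real (Set.Iic x) := sub_nonneg.mpr measureReal_le_one
  rw [← integral_add_compl measurableSet_Iic hint, ← measureReal_def]
  linarith [mul_le_mul_of_nonneg_left hlower hp,
    mul_le_mul_of_nonneg_left hupper (measureReal_nonneg (μ := μ) (s := Set.Iic x))]
end

section
/- Let 𝒫 be a probability measure on ℝ × ℝ with first and second marginals μ₁ and μ₂. Let p be a probability vector on {0,1}×{0,1} with marginals p₁, p₂ satisfying 0 < p₁(1) < 1 and 0 < p₂(1) < 1, and let Λ₁, Λ₂ : ℝ → [0,1] be measurable functions with ∫ Λ₁ dμ₁ = p₁(1) and ∫ Λ₂ dμ₂ = p₂(1). Define ν₁¹ = (Λ₁/p₁(1))·μ₁, ν₁⁰ = ((1−Λ₁)/p₁(0))·μ₁ and similarly ν₂¹, ν₂⁰, and let P = Σ_{s,t ∈ {0,1}} p(s,t) · (ν₁ˢ ⊗ ν₂ᵗ)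 be the latent-Ising pairwise model. Then KL(𝒫 ‖ P) ≥ KL(𝒫 ‖ μ₁ ⊗ μ₂) − log 2. In particular, if the mutual information I_𝒫(X₁,X₂) = KL(𝒫 ‖ μ₁ ⊗ μ₂) is strictly greater than log 2, then KL(𝒫 ‖ P) > 0, i.e., the latent binary model cannot perfectly encode the joint distribution of (X₁, X₂) for any choice of encoding functions. -/
open MeasureTheory Classical

/-- Kullback–Leibler divergence. -/
noncomputable def klDiv {α : Type*} [MeasurableSpace α] (ν ρ : Measure α) : EReal :=
  if ν ≪ ρ ∧ Integrable (llr ν ρ) ν then ((∫ x, llr ν ρ x ∂ν : ℝ) : EReal) else ⊤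

/-- The log-likelihood ratio of a finite measure is bounded below by an integrable function. -/
lemma one_sub_rnDeriv_le_llr {α : Type*} [MeasurableSpace α] {μ M : Measure α}
    [IsFiniteMeasure μ] [IsFiniteMeasure M] (hμM : μ ≪ M) :
    ∀ᵐ x ∂μ, 1 - (M.rnDeriv μ x).toReal ≤ llr μ M x := by
  filter_upwards [Measure.inv_rnDeriv hμM, Measure.rnDeriv_pos hμM,
    hμM.ae_le (Measure.rnDeriv_lt_top μ M)] with x hx hpos hlt
  rw [← hx, Pi.inv_apply, ENNReal.toReal_inv]
  exact Real.one_sub_inv_le_log_of_pos (ENNReal.toReal_pos hpos.ne' hlt.ne)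

/-- The chain rule for log-likelihood ratios through a measure with a given density. -/
lemma llr_withDensity_ofReal {α : Type*} [MeasurableSpace α] {μ M : Measure α}
    [IsFiniteMeasure μ] [IsFiniteMeasure M] {F : α → ℝ} (hF : Measurable F)
    (hac : μ ≪ M.withDensity (fun x => ENNReal.ofReal (F x))) :
    ∀ᵐ x ∂μ, 0 < F x ∧
      llr μ M x = llr μ (M.withDensity (fun x => ENNReal.ofReal (F x))) x + Real.log (F x) := by
  set P := M.withDensity (fun x => ENNReal.ofReal (F x)) with hP
  have : SigmaFinite P := SigmaFinite.withDensity_ofReal F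
  have hμM : μ ≪ M := hac.trans (withDensity_absolutelyContinuous _ _)
  filter_upwards [hμM.ae_le (Measure.rnDeriv_mul_rnDeriv (κ := M) hac),
    hμM.ae_le (Measure.rnDeriv_withDensity M hF.ennreal_ofReal), Measure.rnDeriv_pos hμM,
    hac.ae_le (Measure.rnDeriv_lt_top μ P)] with x hmul hd hpos hlt
  rw [Pi.mul_apply, hd] at hmul
  rw [← hmul] at hpos
  have hμP : μ.rnDeriv P x ≠ 0 := left_ne_zero_of_mul hpos.ne'
  have hFx : 0 < F x := by
    simpa using pos_iff_ne_zero.mpr (right_ne_zero_of_mul hpos.ne')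
  refine ⟨hFx, ?_⟩
  rw [llr, llr, ← hmul, ENNReal.toReal_mul, ENNReal.toReal_ofReal hFx.le,
    Real.log_mul (ENNReal.toReal_pos hμP hlt.ne).ne' hFx.ne']

/-- Replacing a reference measure `M` by a measure whose density is at most `g` lowers the
Kullback–Leibler divergence by at most the logarithm of the mean of `g`. -/
lemma klDiv_sub_log_le_klDiv_withDensity {α : Type*} [MeasurableSpace α] {μ M : Measure α}
    [IsProbabilityMeasure μ] [IsFiniteMeasure M] {F g : α → ℝ} (hF : Measurable F)
    (hFg : ∀ x, F x ≤ g x) (hg : Integrable g μ) {c : ℝ} (hc : 0 < c) (hgc : ∫ x, g x ∂μ ≤ c) :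
    klDiv μ M - ((Real.log c : ℝ) : EReal) ≤
      klDiv μ (M.withDensity (fun x => ENNReal.ofReal (F x))) := by
  set P := M.withDensity (fun x => ENNReal.ofReal (F x)) with hP
  by_cases h : μ ≪ P ∧ Integrable (llr μ P) μ
  swap
  · simp [klDiv, h]
  obtain ⟨hac, hint⟩ := h
  have hμM : μ ≪ M := hac.trans (withDensity_absolutelyContinuous _ _)
  have hupper : ∀ᵐ x ∂μ, llr μ M x ≤ llr μ P x + (Real.log c - 1 + g x / c) := by
    filter_upwards [llr_withDensity_ofReal hF hac] with x ⟨hFx, hx⟩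
    have hlog := Real.log_le_sub_one_of_pos (div_pos hFx hc)
    rw [Real.log_div hFx.ne' hc.ne'] at hlog
    have hle : F x / c ≤ g x / c := by gcongr; exact hFg x
    linarith
  have hgi : Integrable (fun x => Real.log c - 1 + g x / c) μ :=
    (integrable_const _).add (hg.div_const c)
  have hM : Integrable (llr μ M) μ :=
    integrable_of_le_of_le (measurable_llr μ M).aestronglyMeasurable
      (one_sub_rnDeriv_le_llr hμM) hupper
      ((integrable_const _).sub Measure.integrable_toReal_rnDeriv) (hint.add hgi)
  have hle : ∫ x, llr μ M x ∂μ ≤ ∫ x, llr μ P x ∂μ + Real.log c := by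
    have hmono := integral_mono_ae hM (hint.add hgi) hupper
    simp only [Pi.add_apply] at hmono
    rw [integral_add hint hgi, integral_add (integrable_const _) (hg.div_const c),
      integral_const, integral_div] at hmono
    have hdiv : (∫ x, g x ∂μ) / c ≤ 1 := (div_le_one hc).mpr hgc
    simp only [probReal_univ, one_smul] at hmono
    linarith
  rw [klDiv, klDiv, if_pos ⟨hμM, hM⟩, if_pos ⟨hac, hint⟩, ← EReal.coe_sub, EReal.coe_le_coe_iff]
  linarith

/-- A latent binary pairwise model cannot gain more than `log 2` of KL divergence:
`KL(P₀ ‖ P) ≥ KL(P₀ ‖ μ₁ ⊗ μ₂) - log 2`, and if the mutual information of `P₀` exceeds `log 2`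
then `KL(P₀ ‖ P) > 0`. -/
theorem stmt_9 (P₀ : Measure (ℝ × ℝ)) [IsProbabilityMeasure P₀]
    (μ₁ μ₂ : Measure ℝ)
    (hμ₁ : μ₁ = P₀.map Prod.fst) (hμ₂ : μ₂ = P₀.map Prod.snd)
    (p : Bool → Bool → ℝ) (hp0 : ∀ s t, 0 ≤ p s t)
    (hp1 : ∑ s : Bool, ∑ t : Bool, p s t = 1)
    (p₁ p₂ : ℝ)
    (hp₁ : p₁ = p true true + p true false) (hp₂ : p₂ = p true true + p false true)
    (hp₁0 : 0 < p₁) (hp₁1 : p₁ < 1) (hp₂0 : 0 < p₂) (hp₂1 : p₂ < 1)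
    (Λ₁ Λ₂ : ℝ → ℝ) (hΛ₁m : Measurable Λ₁) (hΛ₂m : Measurable Λ₂)
    (hΛ₁b : ∀ x, Λ₁ x ∈ Set.Icc (0 : ℝ) 1) (hΛ₂b : ∀ x, Λ₂ x ∈ Set.Icc (0 : ℝ) 1)
    (hΛ₁ : ∫ x, Λ₁ x ∂μ₁ = p₁) (hΛ₂ : ∫ x, Λ₂ x ∂μ₂ = p₂)
    (ν₁ ν₂ : Bool → Measure ℝ)
    (hν₁ : ∀ s, ν₁ s = if s then μ₁.withDensity (fun x => ENNReal.ofReal (Λ₁ x / p₁))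
      else μ₁.withDensity (fun x => ENNReal.ofReal ((1 - Λ₁ x) / (1 - p₁))))
    (hν₂ : ∀ t, ν₂ t = if t then μ₂.withDensity (fun x => ENNReal.ofReal (Λ₂ x / p₂))
      else μ₂.withDensity (fun x => ENNReal.ofReal ((1 - Λ₂ x) / (1 - p₂))))
    (P : Measure (ℝ × ℝ))
    (hP : P = ∑ s : Bool, ∑ t : Bool, ENNReal.ofReal (p s t) • ((ν₁ s).prod (ν₂ t))) :
    klDiv P₀ (μ₁.prod μ₂) - ((Real.log 2 : ℝ) : EReal) ≤ klDiv P₀ P ∧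
      (((Real.log 2 : ℝ) : EReal) < klDiv P₀ (μ₁.prod μ₂) → 0 < klDiv P₀ P) := by
  have : IsProbabilityMeasure μ₁ := hμ₁ ▸ Measure.isProbabilityMeasure_map (by fun_prop)
  have : IsProbabilityMeasure μ₂ := hμ₂ ▸ Measure.isProbabilityMeasure_map (by fun_prop)
  simp only [Fintype.sum_bool] at hp1
  let a : Bool → ℝ → ℝ := fun s x => if s then Λ₁ x / p₁ else (1 - Λ₁ x) / (1 - p₁)
  let b : Bool → ℝ → ℝ := fun t y => if t then Λ₂ y / p₂ else (1 - Λ₂ y) / (1 - p₂)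
  have ha : ∀ s, Measurable (a s) := by
    rintro (_ | _)
    · exact (hΛ₁m.const_sub 1).div_const _
    · exact hΛ₁m.div_const _
  have hb : ∀ t, Measurable (b t) := by
    rintro (_ | _)
    · exact (hΛ₂m.const_sub 1).div_const _
    · exact hΛ₂m.div_const _
  have hq₁ : 0 < 1 - p₁ := sub_pos.mpr hp₁1
  have hq₂ : 0 < 1 - p₂ := sub_pos.mpr hp₂1
  have ha0 : ∀ s x, 0 ≤ a s x := by
    rintro (_ | _) x
    · exact div_nonneg (sub_nonneg.mpr (hΛ₁b x).2) hq₁.le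
    · exact div_nonneg (hΛ₁b x).1 hp₁0.le
  have hb0 : ∀ t y, 0 ≤ b t y := by
    rintro (_ | _) y
    · exact div_nonneg (sub_nonneg.mpr (hΛ₂b y).2) hq₂.le
    · exact div_nonneg (hΛ₂b y).1 hp₂0.le
  have hν₁a : ∀ s, ν₁ s = μ₁.withDensity (fun x => ENNReal.ofReal (a s x)) := by
    rintro (_ | _) <;> simp [hν₁, a]
  have hν₂b : ∀ t, ν₂ t = μ₂.withDensity (fun y => ENNReal.ofReal (b t y)) := by
    rintro (_ | _) <;> simp [hν₂, b]
  let F : ℝ × ℝ → ℝ := fun z => ∑ s, ∑ t, p s t * (a s z.1 * b t z.2)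
  have hterm : ∀ s t, Measurable fun z : ℝ × ℝ => p s t * (a s z.1 * b t z.2) := fun s t =>
    (((ha s).comp measurable_fst).mul ((hb t).comp measurable_snd)).const_mul _
  have hF : Measurable F :=
    Finset.measurable_sum _ fun s _ => Finset.measurable_sum _ fun t _ => hterm s t
  have hPF : P = (μ₁.prod μ₂).withDensity (fun z => ENNReal.ofReal (F z)) := by
    have hprod : ∀ s t, ENNReal.ofReal (p s t) • (ν₁ s).prod (ν₂ t) =
        (μ₁.prod μ₂).withDensity
          (fun z => ENNReal.ofReal (p s t * (a s z.1 * b t z.2))) := by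
      intro s t
      rw [hν₁a, hν₂b, prod_withDensity (ha s).ennreal_ofReal (hb t).ennreal_ofReal,
        ← withDensity_smul' _ _ ENNReal.ofReal_ne_top]
      congr 1 with z
      simp [ENNReal.ofReal_mul (hp0 s t), ENNReal.ofReal_mul (ha0 s z.1)]
    have hnn : ∀ s t (z : ℝ × ℝ), 0 ≤ p s t * (a s z.1 * b t z.2) := fun s t z =>
      mul_nonneg (hp0 s t) (mul_nonneg (ha0 s z.1) (hb0 t z.2))
    have hsplit : (fun z => ENNReal.ofReal (F z)) =
        ∑ s, ∑ t, fun z : ℝ × ℝ => ENNReal.ofReal (p s t * (a s z.1 * b t z.2)) := by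
      ext z
      simp only [F, Finset.sum_apply]
      rw [ENNReal.ofReal_sum_of_nonneg fun s _ => Finset.sum_nonneg fun t _ => hnn s t z]
      exact Finset.sum_congr rfl fun s _ => ENNReal.ofReal_sum_of_nonneg fun t _ => hnn s t z
    rw [hP, hsplit]
    simp only [hprod, Fintype.sum_bool]
    have hm := fun s t => (hterm s t).ennreal_ofReal
    rw [withDensity_add_left ((hm _ _).add (hm _ _)), withDensity_add_left (hm _ _),
      withDensity_add_left (hm _ _)]
  let g : ℝ → ℝ := fun y => Λ₂ y / p₂ + (1 - Λ₂ y) / (1 - p₂)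
  have hFg : ∀ z, F z ≤ g z.2 := by
    intro z
    have h₁ : p₁ * a true z.1 = Λ₁ z.1 := mul_div_cancel₀ _ hp₁0.ne'
    have h₀ : (1 - p₁) * a false z.1 = 1 - Λ₁ z.1 := mul_div_cancel₀ _ hq₁.ne'
    have hcol : ∀ t, p true t * a true z.1 + p false t * a false z.1 ≤ 1 := by
      intro t
      have hpt : p true t ≤ p₁ := by cases t <;> linarith [hp0 true true, hp0 true false]
      have hpf : p false t ≤ 1 - p₁ := by cases t <;> linarith [hp0 false true, hp0 false false]
      have := mul_le_mul_of_nonneg_right hpt (ha0 true z.1)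
      have := mul_le_mul_of_nonneg_right hpf (ha0 false z.1)
      linarith
    have ht := mul_le_mul_of_nonneg_right (hcol true) (hb0 true z.2)
    have hf := mul_le_mul_of_nonneg_right (hcol false) (hb0 false z.2)
    have hgb : g z.2 = b true z.2 + b false z.2 := by simp [g, b]
    rw [hgb]
    simp only [F, Fintype.sum_bool]
    linarith
  have hΛ₂i : Integrable Λ₂ μ₂ :=
    Integrable.of_bound hΛ₂m.aestronglyMeasurable 1 (.of_forall fun y => by
      rw [Real.norm_of_nonneg (hΛ₂b y).1]; exact (hΛ₂b y).2)
  have hΛ₂i' : Integrable (fun y => 1 - Λ₂ y) μ₂ := (integrable_const 1).sub hΛ₂i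
  have hgi : Integrable g μ₂ := (hΛ₂i.div_const _).add (hΛ₂i'.div_const _)
  have hgint : ∫ y, g y ∂μ₂ = 2 := by
    simp only [g]
    rw [integral_add (hΛ₂i.div_const _) (hΛ₂i'.div_const _), integral_div, integral_div,
      integral_sub (integrable_const 1) hΛ₂i, hΛ₂]
    simp only [integral_const, probReal_univ, one_smul]
    rw [div_self hp₂0.ne', div_self hq₂.ne']
    norm_num
  have hgP : Integrable (fun z : ℝ × ℝ => g z.2) P₀ := by
    rw [hμ₂] at hgi
    exact hgi.comp_measurable measurable_snd
  have hgPint : ∫ z, g z.2 ∂P₀ = 2 := by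
    rw [← hgint, hμ₂, integral_map (by fun_prop) (hμ₂ ▸ hgi.aestronglyMeasurable)]
  have hmain : klDiv P₀ (μ₁.prod μ₂) - ((Real.log 2 : ℝ) : EReal) ≤ klDiv P₀ P :=
    hPF ▸ klDiv_sub_log_le_klDiv_withDensity hF hFg hgP two_pos hgPint.le
  exact ⟨hmain, fun h => (EReal.sub_pos.mpr h).trans_le hmain⟩
end

section
/- Let μ be an atomless probability measure on ℝ with cumulative distribution function F(x) = μ((-∞,x]) and let b ∈ [0,1]. Define ν_b = b·(2F)·μ + (1−b)·(2(1−F))·μ. Then ν_b is a probability measure and for every x ∈ ℝ, ν_b((-∞,x]) = ((2b−1)F(x) + 2(1−b))·F(x). -/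
open MeasureTheory

/-- For a finite atomless measure on `ℝ`, the cdf integrates to half the squared total mass. -/
lemma two_mul_lintegral_measure_Iic (m : Measure ℝ) [IsFiniteMeasure m] [NullSingletonClass m] :
    2 * ∫⁻ t, m (Set.Iic t) ∂m = m Set.univ ^ 2 := by
  have hs : MeasurableSet {p : ℝ × ℝ | p.2 ≤ p.1} :=
    measurableSet_le measurable_snd measurable_fst
  have hswap : ∫⁻ t, m (Set.Iic t) ∂m = ∫⁻ t, m (Set.Ici t) ∂m :=
    (Measure.prod_apply (μ := m) (ν := m) hs).symm.trans (Measure.prod_apply_symm hs)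
  have hmeas : Measurable fun t => m (Set.Iic t) :=
    Monotone.measurable fun _ _ h => measure_mono (Set.Iic_subset_Iic.2 h)
  have hsum : ∀ t, m (Set.Iic t) + m (Set.Ici t) = m Set.univ := fun t => by
    rw [← measure_congr (Iio_ae_eq_Iic (μ := m) (a := t)), ← Set.compl_Iio,
      measure_add_measure_compl measurableSet_Iio]
  calc 2 * ∫⁻ t, m (Set.Iic t) ∂m
      = ∫⁻ t, m (Set.Iic t) ∂m + ∫⁻ t, m (Set.Ici t) ∂m := by rw [two_mul, ← hswap]
    _ = m Set.univ ^ 2 := by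
      rw [← lintegral_add_left hmeas, lintegral_congr hsum, lintegral_const, sq]

/-- On a lower set, the cdf of an atomless measure integrates to half the squared mass. -/
lemma two_mul_setLIntegral_measure_Iic (μ : Measure ℝ) [IsFiniteMeasure μ] [NullSingletonClass μ]
    {A : Set ℝ} (hA : MeasurableSet A) (hlow : IsLowerSet A) :
    2 * ∫⁻ t in A, μ (Set.Iic t) ∂μ = μ A ^ 2 := by
  rw [← Measure.restrict_apply_univ A, ← two_mul_lintegral_measure_Iic (μ.restrict A)]
  congr 1
  refine setLIntegral_congr_fun hA fun t ht => ?_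
  simp only [Measure.restrict_apply measurableSet_Iic]
  rw [Set.inter_eq_left.2 (hlow.Iic_subset ht)]

/-- The Jeffrey-updated law for the cdf encoding: `ν_b = b·(2F)μ + (1-b)·(2(1-F))μ` is a
probability measure with cdf `((2b-1)F(x) + 2(1-b))·F(x)`. -/
theorem stmt_13 (μ : Measure ℝ) [IsProbabilityMeasure μ]
    (hatomless : ∀ x : ℝ, μ {x} = 0)
    (F : ℝ → ℝ) (hF : ∀ x, F x = (μ (Set.Iic x)).toReal)
    (b : ℝ) (hb : b ∈ Set.Icc (0 : ℝ) 1)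
    (ν : Measure ℝ)
    (hν : ν = ENNReal.ofReal b • μ.withDensity (fun t => ENNReal.ofReal (2 * F t))
      + ENNReal.ofReal (1 - b) • μ.withDensity (fun t => ENNReal.ofReal (2 * (1 - F t)))) :
    IsProbabilityMeasure ν ∧
      ∀ x : ℝ, (ν (Set.Iic x)).toReal = ((2 * b - 1) * F x + 2 * (1 - b)) * F x := by
  have : NullSingletonClass μ := ⟨hatomless⟩
  have hFr : ∀ x, F x = μ.real (Set.Iic x) := hF
  have hF0 : ∀ t, 0 ≤ F t := fun t => hFr t ▸ measureReal_nonneg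
  have hF1 : ∀ t, F t ≤ 1 := fun t => hFr t ▸ measureReal_le_one
  have hFm : Measurable F := Monotone.measurable fun s t h => by
    rw [hFr, hFr]
    exact measureReal_mono (Set.Iic_subset_Iic.2 h)
  have key : ∀ A : Set ℝ, MeasurableSet A → IsLowerSet A →
      ν A = ENNReal.ofReal (((2 * b - 1) * μ.real A + 2 * (1 - b)) * μ.real A) := by
    intro A hA hlow
    have hup : ∫⁻ t in A, ENNReal.ofReal (2 * F t) ∂μ = ENNReal.ofReal (μ.real A ^ 2) := by
      rw [ENNReal.ofReal_pow measureReal_nonneg, ofReal_measureReal,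
        ← two_mul_setLIntegral_measure_Iic μ hA hlow, ← lintegral_const_mul' _ _ (by simp)]
      refine lintegral_congr fun t => ?_
      rw [ENNReal.ofReal_mul zero_le_two, hFr, ofReal_measureReal, ENNReal.ofReal_ofNat]
    have hsum : ∫⁻ t in A, ENNReal.ofReal (2 * F t) ∂μ
        + ∫⁻ t in A, ENNReal.ofReal (2 * (1 - F t)) ∂μ = ENNReal.ofReal (2 * μ.real A) := by
      rw [← lintegral_add_left (by fun_prop), ENNReal.ofReal_mul zero_le_two, ofReal_measureReal,
        ← setLIntegral_const]
      refine lintegral_congr fun t => ?_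
      rw [← ENNReal.ofReal_add (by linarith [hF0 t]) (by linarith [hF1 t])]
      ring_nf
    have hdown : ∫⁻ t in A, ENNReal.ofReal (2 * (1 - F t)) ∂μ
        = ENNReal.ofReal (2 * μ.real A - μ.real A ^ 2) := by
      rw [ENNReal.ofReal_sub _ (sq_nonneg _), ← hsum, hup,
        ENNReal.add_sub_cancel_left ENNReal.ofReal_ne_top]
    have h0 : 0 ≤ μ.real A := measureReal_nonneg
    have h1 : μ.real A ≤ 1 := measureReal_le_one
    rw [hν, Measure.add_apply, Measure.smul_apply, Measure.smul_apply, withDensity_apply _ hA,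
      withDensity_apply _ hA, hup, hdown, smul_eq_mul, smul_eq_mul, ← ENNReal.ofReal_mul hb.1,
      ← ENNReal.ofReal_mul (sub_nonneg.2 hb.2), ← ENNReal.ofReal_add
        (mul_nonneg hb.1 (sq_nonneg _)) (mul_nonneg (sub_nonneg.2 hb.2) (by nlinarith))]
    ring_nf
  refine ⟨⟨?_⟩, fun x => ?_⟩
  · rw [key _ MeasurableSet.univ isLowerSet_univ, probReal_univ]
    ring_nf
    simp
  · rw [key _ measurableSet_Iic (isLowerSet_Iic x), ← hFr, ENNReal.toReal_ofReal]
    refine mul_nonneg ?_ (hF0 x)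
    nlinarith [mul_nonneg hb.1 (hF0 x), mul_nonneg (sub_nonneg.2 hb.2) (sub_nonneg.2 (hF1 x)), hb.2]
end

section
/- Let ψ : {0,1} × {0,1} → ℝ be strictly positive and let α_i, α_j ∈ (0,1). Define the maps U, V : [0,1] → [0,1] by U(v) = (ψ(0,0)α_j(1−v) + ψ(0,1)(1−α_j)v) / ((ψ(0,0)+ψ(1,0))α_j(1−v) + (ψ(0,1)+ψ(1,1))(1−α_j)v) and V(u) = (ψ(0,0)α_i(1−u) + ψ(1,0)(1−α_i)u) / ((ψ(0,0)+ψ(0,1))α_i(1−u) + (ψ(1,0)+ψ(1,1))(1−α_i)u). Then for any initial point (u₀, v₀) ∈ (0,1)², the sequences defined by u_{n+1} = U(v_n) and v_{n+1} = V(u_n) converge, and the limit (u*, v*) is the same for all initial points in (0,1)²; moreover (u*, v*) satisfies u* = U(v*) and v* = V(u*). -/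
open Filter

/-- The Möbius map `y ↦ (a + b y) / (c + d y)` on positive reals, in logarithmic coordinates. -/
noncomputable def logMobius (a b c d s : ℝ) : ℝ :=
  Real.log (a + b * Real.exp s) - Real.log (c + d * Real.exp s)

/-- A Möbius map with positive coefficients is a strict contraction in logarithmic coordinates
(the two-dimensional case of Birkhoff's contraction theorem). -/
theorem exists_contractingWith_logMobius {a b c d : ℝ} (ha : 0 < a) (hb : 0 < b) (hc : 0 < c)
    (hd : 0 < d) : ∃ K : NNReal, ContractingWith K (logMobius a b c d) := by
  have hsum : 0 < b * c + a * d := by positivity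
  have hK : 0 ≤ |b * c - a * d| / (b * c + a * d) := by positivity
  refine ⟨(|b * c - a * d| / (b * c + a * d)).toNNReal, ?_, ?_⟩
  · rw [← NNReal.coe_lt_coe, Real.coe_toNNReal _ hK, NNReal.coe_one, div_lt_one hsum, abs_lt]
    constructor <;> nlinarith [mul_pos hb hc, mul_pos ha hd]
  · have hderiv : ∀ s, HasDerivAt (logMobius a b c d)
        (b * Real.exp s / (a + b * Real.exp s) - d * Real.exp s / (c + d * Real.exp s)) s := by
      intro s
      have hab : a + b * Real.exp s ≠ 0 := by positivity
      have hcd : c + d * Real.exp s ≠ 0 := by positivity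
      exact ((((Real.hasDerivAt_exp s).const_mul b).const_add a).log hab).sub
        ((((Real.hasDerivAt_exp s).const_mul d).const_add c).log hcd)
    refine lipschitzWith_of_nnnorm_deriv_le (fun s => (hderiv s).differentiableAt) fun s => ?_
    rw [(hderiv s).deriv, ← NNReal.coe_le_coe, coe_nnnorm, Real.norm_eq_abs,
      Real.coe_toNNReal _ hK]
    have ht := Real.exp_pos s
    generalize Real.exp s = t at ht
    have hab : 0 < a + b * t := by positivity
    have hcd : 0 < c + d * t := by positivity
    have hdiff : b * t / (a + b * t) - d * t / (c + d * t) =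
        (b * c - a * d) * t / ((a + b * t) * (c + d * t)) := by
      field_simp
      ring
    rw [hdiff, abs_div, abs_mul, abs_of_pos ht, abs_of_pos (mul_pos hab hcd),
      div_le_div_iff₀ (mul_pos hab hcd) hsum, mul_assoc]
    refine mul_le_mul_of_nonneg_left ?_ (abs_nonneg _)
    nlinarith [mul_pos ha hc, mul_pos (mul_pos hb hd) (mul_pos ht ht)]

theorem sigmoid_log {x : ℝ} (hx : 0 < x) : Real.sigmoid (Real.log x) = x / (x + 1) := by
  rw [Real.sigmoid_def, Real.exp_neg, Real.exp_log hx]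
  field_simp

/-- The sigmoid conjugates `logMobius` to the normalized message update. -/
theorem sigmoid_logMobius {a b c d : ℝ} (ha : 0 < a) (hb : 0 < b) (hc : 0 < c) (hd : 0 < d)
    (s : ℝ) : Real.sigmoid (logMobius a b c d s) =
      (a * (1 - Real.sigmoid s) + b * Real.sigmoid s) /
        ((a + c) * (1 - Real.sigmoid s) + (b + d) * Real.sigmoid s) := by
  have ht := Real.exp_pos s
  have hs : Real.sigmoid s = Real.exp s / (Real.exp s + 1) := by
    simpa using sigmoid_log ht
  rw [hs]
  unfold logMobius
  generalize Real.exp s = t at ht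
  have hab : 0 < a + b * t := by positivity
  have hcd : 0 < c + d * t := by positivity
  rw [← Real.log_div hab.ne' hcd.ne', sigmoid_log (div_pos hab hcd)]
  have hone : 1 - t / (t + 1) = 1 / (t + 1) := by
    field_simp
    ring
  rw [hone]
  have hden : (a + c) * (1 / (t + 1)) + (b + d) * (t / (t + 1)) =
      ((a + b * t) + (c + d * t)) / (t + 1) := by
    field_simp
    ring
  rw [hden]
  field_simp

/-- Swapping the coordinates while applying a contraction in each is a contraction. -/
theorem ContractingWith.prod_swap {α β : Type*} [EMetricSpace α] [EMetricSpace β]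
    {K L : NNReal} {f : β → α} {g : α → β} (hK : K < 1) (hL : L < 1)
    (hf : LipschitzWith K f) (hg : LipschitzWith L g) :
    ContractingWith (max K L) fun p : α × β => (f p.2, g p.1) := by
  refine ⟨max_lt hK hL, ?_⟩
  simpa using (hf.comp LipschitzWith.prod_snd).prodMk (hg.comp LipschitzWith.prod_fst)

/-- Convergence of the mirror-BP message recursion on a single pairwise factor `ψ` with two
imposed beliefs `α_i, α_j`: the alternating iterates `u_{n+1} = U(v_n)`, `v_{n+1} = V(u_n)`
converge to a limit independent of the initial point in `(0,1)²`, and the limit is the unique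
fixed point of the update. -/
theorem stmt_14 (ψ : Fin 2 → Fin 2 → ℝ) (hψ : ∀ s t, 0 < ψ s t)
    (αi αj : ℝ) (hαi : αi ∈ Set.Ioo (0 : ℝ) 1) (hαj : αj ∈ Set.Ioo (0 : ℝ) 1)
    (U V : ℝ → ℝ)
    (hU : ∀ v, U v = (ψ 0 0 * αj * (1 - v) + ψ 0 1 * (1 - αj) * v) /
      ((ψ 0 0 + ψ 1 0) * αj * (1 - v) + (ψ 0 1 + ψ 1 1) * (1 - αj) * v))
    (hV : ∀ u, V u = (ψ 0 0 * αi * (1 - u) + ψ 1 0 * (1 - αi) * u) /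
      ((ψ 0 0 + ψ 0 1) * αi * (1 - u) + (ψ 1 0 + ψ 1 1) * (1 - αi) * u)) :
    ∃ ustar vstar : ℝ, ustar = U vstar ∧ vstar = V ustar ∧
      ∀ u₀ v₀ : ℝ, u₀ ∈ Set.Ioo (0 : ℝ) 1 → v₀ ∈ Set.Ioo (0 : ℝ) 1 →
        Tendsto (fun n => ((fun p : ℝ × ℝ => (U p.2, V p.1))^[n] (u₀, v₀)).1)
            atTop (nhds ustar) ∧
          Tendsto (fun n => ((fun p : ℝ × ℝ => (U p.2, V p.1))^[n] (u₀, v₀)).2)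
            atTop (nhds vstar) := by
  obtain ⟨K, hK⟩ := exists_contractingWith_logMobius (mul_pos (hψ 0 0) hαj.1)
    (mul_pos (hψ 0 1) (sub_pos.2 hαj.2)) (mul_pos (hψ 1 0) hαj.1)
    (mul_pos (hψ 1 1) (sub_pos.2 hαj.2))
  obtain ⟨L, hL⟩ := exists_contractingWith_logMobius (mul_pos (hψ 0 0) hαi.1)
    (mul_pos (hψ 1 0) (sub_pos.2 hαi.2)) (mul_pos (hψ 0 1) hαi.1)
    (mul_pos (hψ 1 1) (sub_pos.2 hαi.2))
  have hUf := sigmoid_logMobius (mul_pos (hψ 0 0) hαj.1)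
    (mul_pos (hψ 0 1) (sub_pos.2 hαj.2)) (mul_pos (hψ 1 0) hαj.1)
    (mul_pos (hψ 1 1) (sub_pos.2 hαj.2))
  have hVg := sigmoid_logMobius (mul_pos (hψ 0 0) hαi.1)
    (mul_pos (hψ 1 0) (sub_pos.2 hαi.2)) (mul_pos (hψ 0 1) hαi.1)
    (mul_pos (hψ 1 1) (sub_pos.2 hαi.2))
  simp only [← add_mul, ← hU, ← hV] at hUf hVg
  generalize logMobius (ψ 0 0 * αj) _ _ _ = f at hK hUf
  generalize logMobius (ψ 0 0 * αi) _ _ _ = g at hL hVg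
  have hcontr := ContractingWith.prod_swap hK.1 hL.1 hK.2 hL.2
  have hsemi : Function.Semiconj (Prod.map Real.sigmoid Real.sigmoid)
      (fun p : ℝ × ℝ => (f p.2, g p.1)) (fun p : ℝ × ℝ => (U p.2, V p.1)) := fun p =>
    Prod.ext (hUf p.2) (hVg p.1)
  have hfix := hcontr.fixedPoint_isFixedPt
  have hlim := hcontr.tendsto_iterate_fixedPoint
  generalize ContractingWith.fixedPoint _ hcontr = q at hfix hlim
  have hfix' := hfix.map hsemi
  refine ⟨Real.sigmoid q.1, Real.sigmoid q.2, (congrArg Prod.fst hfix').symm,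
    (congrArg Prod.snd hfix').symm, fun u₀ v₀ hu₀ hv₀ => ?_⟩
  rw [← Real.range_sigmoid] at hu₀ hv₀
  obtain ⟨s, rfl⟩ := hu₀
  obtain ⟨t, rfl⟩ := hv₀
  have hcont : Continuous (Prod.map Real.sigmoid Real.sigmoid) :=
    continuous_sigmoid.prodMap continuous_sigmoid
  have key := (hcont.tendsto q).comp (hlim (s, t))
  have hiter : ∀ n, (fun p : ℝ × ℝ => (U p.2, V p.1))^[n] (Real.sigmoid s, Real.sigmoid t) =
      Prod.map Real.sigmoid Real.sigmoid ((fun p : ℝ × ℝ => (f p.2, g p.1))^[n] (s, t)) :=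
    fun n => ((hsemi.iterate_right n).eq (s, t)).symm
  simp only [hiter]
  exact ⟨(continuous_fst.tendsto _).comp key, (continuous_snd.tendsto _).comp key⟩
end

section
/- Let a, b, c, d be real numbers such that the Möbius function f(x) = (a·x + b)/(c·x + d) has nonvanishing denominator c·x + d ≠ 0 for all x ∈ [0,1], maps [0,1] into [0,1], is monotone nondecreasing on [0,1], and satisfies f(0) > 0 and f(1) < 1. Then f has exactly one fixed point x* in [0,1], and for every x₀ ∈ [0,1] the sequence of iterates x_{n+1} = f(x_n) converges to x*. -/
open Filter

/-- A continuous monotone self-map of a complete lattice with at most one fixed point has a fixed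
point, and all of its iterate sequences converge to it. -/
theorem Monotone.exists_isFixedPt_forall_tendsto_iterate {X : Type*} [CompleteLattice X]
    [TopologicalSpace X] [OrderTopology X] [T2Space X] [SupConvergenceClass X]
    [InfConvergenceClass X] {F : X → X} (hF : Monotone F) (hc : Continuous F)
    (huniq : (Function.fixedPoints F).Subsingleton) :
    ∃ p, Function.IsFixedPt F p ∧ ∀ x, Tendsto (fun n => F^[n] x) atTop (nhds p) := by
  have hbot := tendsto_atTop_iSup (hF.monotone_iterate_of_le_map (bot_le : ⊥ ≤ F ⊥))
  have htop := tendsto_atTop_iInf (hF.antitone_iterate_of_map_le (le_top : F ⊤ ≤ ⊤))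
  have hfb := isFixedPt_of_tendsto_iterate hbot hc.continuousAt
  have hft := isFixedPt_of_tendsto_iterate htop hc.continuousAt
  rw [huniq hft hfb] at htop
  exact ⟨_, hfb, fun x => tendsto_of_tendsto_of_tendsto_of_le_of_le hbot htop
    (fun n => hF.iterate n bot_le) (fun n => hF.iterate n le_top)⟩

/-- A real quadratic polynomial with values of opposite sign at `0` and `1` has at most one root
in `[0,1]`. -/
theorem eq_of_quadratic_roots_of_opposite_signs {p q r y z : ℝ} (hsign : r * (p + q + r) < 0)
    (hy : y ∈ Set.Icc (0 : ℝ) 1) (hz : z ∈ Set.Icc (0 : ℝ) 1)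
    (hpy : p * y ^ 2 + q * y + r = 0) (hpz : p * z ^ 2 + q * z + r = 0) : y = z := by
  by_contra hne
  have hq : q = -(p * (y + z)) := by
    have : (y - z) * (p * (y + z) + q) = 0 := by linear_combination hpy - hpz
    rcases mul_eq_zero.mp this with h | h
    · exact absurd (sub_eq_zero.mp h) hne
    · linarith
  have hr : r = p * (y * z) := by
    subst hq
    linear_combination hpy
  have hnonneg : 0 ≤ p ^ 2 * ((y * z) * ((1 - y) * (1 - z))) :=
    mul_nonneg (sq_nonneg p) (mul_nonneg (mul_nonneg hy.1 hz.1)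
      (mul_nonneg (sub_nonneg.mpr hy.2) (sub_nonneg.mpr hz.2)))
  subst hq hr
  nlinarith

/-- An affine function without zeros on `[0,1]` has values of the same sign at `0` and `1`. -/
theorem mul_add_pos_of_affine_ne_zero {c d : ℝ}
    (hden : ∀ x ∈ Set.Icc (0 : ℝ) 1, c * x + d ≠ 0) : 0 < d * (c + d) := by
  by_contra! h
  have hd : d ≠ 0 := by simpa using hden 0 (by simp)
  have hpos : 0 < d ^ 2 := by positivity
  have hcd : 0 < -(c * d) := by nlinarith
  have hc : c ≠ 0 := by
    rintro rfl
    simp at hcd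
  refine hden (-d / c) ⟨?_, ?_⟩ (by field_simp; ring)
  · rw [show -d / c = -(c * d) / c ^ 2 by field_simp]
    positivity
  · rw [show -d / c = d ^ 2 / -(c * d) by field_simp, div_le_one hcd]
    nlinarith

/-- A monotone nondecreasing Möbius self-map of `[0,1]` with `f(0) > 0` and `f(1) < 1` has a
unique fixed point in `[0,1]`, to which all iterate sequences started in `[0,1]` converge. -/
theorem stmt_15 (a b c d : ℝ) (f : ℝ → ℝ) (hf : ∀ x, f x = (a * x + b) / (c * x + d))
    (hden : ∀ x ∈ Set.Icc (0 : ℝ) 1, c * x + d ≠ 0)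
    (hmaps : Set.MapsTo f (Set.Icc (0 : ℝ) 1) (Set.Icc (0 : ℝ) 1))
    (hmono : MonotoneOn f (Set.Icc (0 : ℝ) 1))
    (h0 : 0 < f 0) (h1 : f 1 < 1) :
    ∃ xstar ∈ Set.Icc (0 : ℝ) 1, f xstar = xstar ∧
      (∀ y ∈ Set.Icc (0 : ℝ) 1, f y = y → y = xstar) ∧
      ∀ x₀ ∈ Set.Icc (0 : ℝ) 1, Tendsto (fun n => f^[n] x₀) atTop (nhds xstar) := by
  have hcont : ContinuousOn f (Set.Icc (0 : ℝ) 1) := by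
    rw [funext hf]
    exact ContinuousOn.div (by fun_prop) (by fun_prop) hden
  have hprod := mul_add_pos_of_affine_ne_zero hden
  have hd : d ≠ 0 := left_ne_zero_of_mul hprod.ne'
  have hcd : c + d ≠ 0 := right_ne_zero_of_mul hprod.ne'
  have hb : b = f 0 * d := by simp [hf, hd]
  have hab : a + b = f 1 * (c + d) := by simp [hf, hcd]
  have hsign : -b * (c + (d - a) + -b) < 0 := by
    have hval : -b * (c + (d - a) + -b) = -(f 0 * (1 - f 1) * (d * (c + d))) := by
      rw [show c + (d - a) + -b = (1 - f 1) * (c + d) by linear_combination -hab]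
      linear_combination -((1 - f 1) * (c + d)) * hb
    rw [hval]
    exact neg_lt_zero.mpr (mul_pos (mul_pos h0 (sub_pos.mpr h1)) hprod)
  have hroot : ∀ y ∈ Set.Icc (0 : ℝ) 1, f y = y → c * y ^ 2 + (d - a) * y + -b = 0 := by
    intro y hy hfy
    rw [hf, div_eq_iff (hden y hy)] at hfy
    linear_combination -hfy
  have huniq : ∀ y ∈ Set.Icc (0 : ℝ) 1, ∀ z ∈ Set.Icc (0 : ℝ) 1, f y = y → f z = z → y = z :=
    fun y hy z hz hfy hfz =>
      eq_of_quadratic_roots_of_opposite_signs hsign hy hz (hroot y hy hfy) (hroot z hz hfz)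
  obtain ⟨p, hp, hlim⟩ := Monotone.exists_isFixedPt_forall_tendsto_iterate
    (F := hmaps.restrict) (fun x y hxy => hmono x.2 y.2 hxy) (hcont.mapsToRestrict hmaps)
    (fun y hy z hz => Subtype.ext (huniq y y.2 z z.2 (congrArg Subtype.val hy)
      (congrArg Subtype.val hz)))
  have hfp : f p = p := congrArg Subtype.val hp
  refine ⟨p, p.2, hfp, fun y hy hfy => huniq y hy p p.2 hfy hfp, fun x hx => ?_⟩
  have hx_lim := (continuous_subtype_val.tendsto p).comp (hlim ⟨x, hx⟩)
  refine hx_lim.congr fun n => ?_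
  simp [hmaps.iterate_restrict n]
end
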